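/- (Lemma 2.2: stability of T_p under weak convergence.) Let (E,d) be a Polish space and let (μ_n)_{n∈ℕ} and μ be probability measures on E. If μ_n satisfies T_p(C) for every n and μ_n → μ weakly, then μ satisfies T_p(C). -/

import Mathlib

open MeasureTheory ProbabilityTheory ENNReal

noncomputable section

/-- `π` is a coupling of `μ` and `ν`. -/
def IsCoupling {E F : Type*} [MeasurableSpace E] [MeasurableSpace F]
    (π : Measure (E × F)) (μ : Measure E) (ν : Measure F) : Prop :=
  π.map Prod.fst = μ ∧ π.map Prod.snd = ν

/-- The `L^p`-Wasserstein distance associated to the cost function `d`, valued in `ℝ≥0∞`. -/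
def wassersteinDist {E : Type*} [MeasurableSpace E] (p : ℝ) (d : E → E → ℝ)
    (μ ν : Measure E) : ℝ≥0∞ :=
  ⨅ (π : Measure (E × E)) (_ : IsCoupling π μ ν),
    (∫⁻ z, ENNReal.ofReal (d z.1 z.2) ^ p ∂π) ^ (1 / p)

/-- The `L^p`-Wasserstein distance for an extended (`ℝ≥0∞`-valued) pseudo-metric `d`. -/
def wassersteinDistE {E : Type*} [MeasurableSpace E] (p : ℝ) (d : E → E → ℝ≥0∞)
    (μ ν : Measure E) : ℝ≥0∞ :=
  ⨅ (π : Measure (E × E)) (_ : IsCoupling π μ ν),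
    (∫⁻ z, d z.1 z.2 ^ p ∂π) ^ (1 / p)

open Classical in
/-- Relative entropy (Kullback information) `H(ν | μ)`, valued in `ℝ≥0∞`. -/
def relEntropy {E : Type*} [MeasurableSpace E] (ν μ : Measure E) : ℝ≥0∞ :=
  if ν ≪ μ ∧ Integrable (fun x => Real.log ((ν.rnDeriv μ x).toReal)) ν then
    ENNReal.ofReal (∫ x, Real.log ((ν.rnDeriv μ x).toReal) ∂ν)
  else ∞

/-- The transportation cost-information inequality `T_p(C)` for `μ` on `(E, d)`:
`W_p(μ, ν) ≤ √(2 C H(ν|μ))` for every probability measure `ν`, written in the equivalent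
squared form `W_p(μ,ν)² ≤ 2C·H(ν|μ)` in `ℝ≥0∞`. -/
def TpIneq {E : Type*} [MeasurableSpace E] (p : ℝ) (d : E → E → ℝ) (C : ℝ)
    (μ : Measure E) : Prop :=
  ∀ ν : Measure E, IsProbabilityMeasure ν →
    wassersteinDist p d μ ν ^ 2 ≤ ENNReal.ofReal (2 * C) * relEntropy ν μ

/-- The transportation cost-information inequality `T_p(C)` for an extended pseudo-metric. -/
def TpIneqE {E : Type*} [MeasurableSpace E] (p : ℝ) (d : E → E → ℝ≥0∞) (C : ℝ)
    (μ : Measure E) : Prop :=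
  ∀ ν : Measure E, IsProbabilityMeasure ν →
    wassersteinDistE p d μ ν ^ 2 ≤ ENNReal.ofReal (2 * C) * relEntropy ν μ

/-!
The distance `W_p` is jointly lower semicontinuous in its two arguments: by Prokhorov's theorem the
map sending a measure on `E × E` to its marginals is proper, and `W_p` is the infimum over its
fibres of a lower semicontinuous cost. It therefore suffices to find, for `ν` with `H(ν|μ) < a` and
all `μ'` close to `μ`, a measure `ν'` close to `ν` with `H(ν'|μ') < a`. If `ν` is an exponential
tilting of `μ` by a bounded continuous `f`, the tilting of `μ'` by the same `f` works, since both it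
and its entropy depend continuously on `μ'`. In general, `ν` is a weak limit of such tiltings of `μ`
with entropies at most `H(ν|μ) + o(1)`: truncate the density and approximate it in `L¹(μ)`.
-/

open Filter Topology Set InformationTheory
open scoped BoundedContinuousFunction NNReal

section Wasserstein

theorem lowerSemicontinuous_iInf_fiber {X Y β : Type*} [TopologicalSpace X] [TopologicalSpace Y]
    [CompleteLinearOrder β] [DenselyOrdered β] {Φ : X → Y} {F : X → β}
    (hΦ : IsClosedMap Φ) (hF : LowerSemicontinuous F) :
    LowerSemicontinuous fun y => ⨅ (x) (_ : Φ x = y), F x := by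
  refine lowerSemicontinuous_iff_isClosed_preimage.2 fun b => ?_
  have sublevel_eq : (fun y => ⨅ (x) (_ : Φ x = y), F x) ⁻¹' Iic b =
      ⋂ c ∈ Ioi b, Φ '' (F ⁻¹' Iic c) := by
    ext y
    simp only [mem_preimage, mem_Iic, mem_iInter, mem_Ioi, mem_image]
    constructor
    · intro hy c hc
      obtain ⟨x, hx⟩ := iInf_lt_iff.1 (hy.trans_lt hc)
      obtain ⟨rfl, hxc⟩ := iInf_lt_iff.1 hx
      exact ⟨x, hxc.le, rfl⟩
    · intro h
      refine le_of_forall_gt_imp_ge_of_dense fun c hc => ?_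
      obtain ⟨x, hxc, hx⟩ := h c hc
      exact (iInf₂_le x hx).trans hxc
  rw [sublevel_eq]
  exact isClosed_biInter fun c _ => hΦ _ (hF.isClosed_preimage c)

section Lintegral

variable {X : Type*} [TopologicalSpace X] [MeasurableSpace X] [OpensMeasurableSpace X]
  {c : X → ℝ≥0∞}

theorem continuous_lintegral_of_le (hc : Continuous c) {C : ℝ≥0} (hC : ∀ x, c x ≤ C) :
    Continuous fun π : ProbabilityMeasure X => ∫⁻ x, c x ∂(π : Measure X) := by
  have c_ne_top (x : X) : c x ≠ ∞ := ne_top_of_le_ne_top coe_ne_top (hC x)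
  have toNNReal_le (x : X) : (c x).toNNReal ≤ C := ENNReal.toNNReal_mono coe_ne_top (hC x)
  let g : X →ᵇ ℝ≥0 := .mkOfBound
    ⟨fun x => (c x).toNNReal, continuousOn_toNNReal.comp_continuous hc c_ne_top⟩ C
    fun x y => abs_sub_le_of_nonneg_of_le (NNReal.coe_nonneg _) (toNNReal_le x)
      (NNReal.coe_nonneg _) (toNNReal_le y)
  have coe_g (x : X) : (g x : ℝ≥0∞) = c x := coe_toNNReal (c_ne_top x)
  simpa only [coe_g] using ProbabilityMeasure.continuous_lintegral_boundedContinuousFunction g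

theorem lowerSemicontinuous_lintegral (hc : Continuous c) :
    LowerSemicontinuous fun π : ProbabilityMeasure X => ∫⁻ x, c x ∂(π : Measure X) := by
  have lintegral_eq_iSup (π : ProbabilityMeasure X) :
      ∫⁻ x, c x ∂(π : Measure X) = ⨆ n : ℕ, ∫⁻ x, min (c x) n ∂(π : Measure X) := by
    rw [← lintegral_iSup (fun n => hc.measurable.min measurable_const)
      fun m n hmn x => min_le_min_left _ (Nat.cast_le.2 hmn)]
    simp only [← inf_iSup_eq, ENNReal.iSup_natCast, inf_top_eq]
  simp only [lintegral_eq_iSup]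
  exact lowerSemicontinuous_iSup fun n => Continuous.lowerSemicontinuous <|
    continuous_lintegral_of_le (C := n) (hc.min continuous_const) fun x => min_le_right _ _

end Lintegral

/-- The pair of marginals of a probability measure on a product. Its fibres are the sets of
couplings, bundled as probability measures. -/
def marginals {E F : Type*} [MeasurableSpace E] [MeasurableSpace F]
    (π : ProbabilityMeasure (E × F)) : ProbabilityMeasure E × ProbabilityMeasure F :=
  (π.map measurable_fst.aemeasurable, π.map measurable_snd.aemeasurable)

theorem marginals_eq_iff {E F : Type*} [MeasurableSpace E] [MeasurableSpace F]
    {π : ProbabilityMeasure (E × F)} {ρ : ProbabilityMeasure E × ProbabilityMeasure F} :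
    marginals π = ρ ↔ IsCoupling (π : Measure (E × F)) ρ.1 ρ.2 :=
  Prod.ext_iff.trans (and_congr Subtype.ext_iff Subtype.ext_iff)

theorem wassersteinDistE_eq_iInf_marginals {E : Type*} [MeasurableSpace E] (p : ℝ)
    (d : E → E → ℝ≥0∞) (ρ : ProbabilityMeasure E × ProbabilityMeasure E) :
    wassersteinDistE p d ρ.1 ρ.2 = ⨅ (π : ProbabilityMeasure (E × E)) (_ : marginals π = ρ),
      (∫⁻ z, d z.1 z.2 ^ p ∂(π : Measure (E × E))) ^ (1 / p) := by
  refine le_antisymm (le_iInf₂ fun π hπ => iInf₂_le (π : Measure (E × E)) (marginals_eq_iff.1 hπ))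
    (le_iInf₂ fun π hπ => ?_)
  have : IsProbabilityMeasure (π.map Prod.fst) := hπ.1 ▸ inferInstance
  have : IsProbabilityMeasure π := Measure.isProbabilityMeasure_of_map Prod.fst
  let π' : ProbabilityMeasure (E × E) := ⟨π, this⟩
  exact iInf₂_le π' ((marginals_eq_iff (π := π')).2 hπ)

section Polish

variable {E F : Type*} [TopologicalSpace E] [PolishSpace E] [MeasurableSpace E] [BorelSpace E]
  [TopologicalSpace F] [PolishSpace F] [MeasurableSpace F] [BorelSpace F]

theorem isTightMeasureSet_of_isCompact {K : Set (ProbabilityMeasure E)} (hK : IsCompact K) :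
    IsTightMeasureSet {(μ : Measure E) | μ ∈ K} := by
  let := TopologicalSpace.upgradeIsCompletelyMetrizable E
  exact isTightMeasureSet_of_isCompact_closure hK.closure

theorem isProperMap_marginals : IsProperMap (marginals (E := E) (F := F)) := by
  have marginals_continuous : Continuous (marginals (E := E) (F := F)) :=
    (ProbabilityMeasure.continuous_map continuous_fst).prodMk
      (ProbabilityMeasure.continuous_map continuous_snd)
  refine isProperMap_iff_isCompact_preimage.2 ⟨marginals_continuous, fun K hK => ?_⟩
  have tight_fst := isTightMeasureSet_of_isCompact (hK.image continuous_fst)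
  have tight_snd := isTightMeasureSet_of_isCompact (hK.image continuous_snd)
  have tight : IsTightMeasureSet {(π : Measure (E × F)) | π ∈ marginals ⁻¹' K} := by
    refine .prodMk (tight_fst.subset ?_) (tight_snd.subset ?_)
    all_goals
      rintro _ ⟨_, ⟨π, hπ, rfl⟩, rfl⟩
      exact ⟨_, mem_image_of_mem _ hπ, rfl⟩
  exact (isCompact_closure_of_isTightMeasureSet tight).of_isClosed_subset
    (hK.isClosed.preimage marginals_continuous) subset_closure

theorem lowerSemicontinuous_wassersteinDistE {p : ℝ} (hp : 0 < p) {d : E → E → ℝ≥0∞}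
    (hd : Continuous (Function.uncurry d)) :
    LowerSemicontinuous fun ρ : ProbabilityMeasure E × ProbabilityMeasure E =>
      wassersteinDistE p d ρ.1 ρ.2 := by
  simp only [wassersteinDistE_eq_iInf_marginals]
  have cost_continuous : Continuous fun z : E × E => d z.1 z.2 ^ p :=
    ENNReal.continuous_rpow_const.comp hd
  exact lowerSemicontinuous_iInf_fiber isProperMap_marginals.isClosedMap <|
    ENNReal.continuous_rpow_const.comp_lowerSemicontinuous
      (lowerSemicontinuous_lintegral cost_continuous)
      (ENNReal.monotone_rpow_of_nonneg (one_div_pos.2 hp).le)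

end Polish

end Wasserstein

section Entropy

variable {E : Type*} [MeasurableSpace E]

theorem relEntropy_eq_klDiv (ν μ : Measure E) [IsProbabilityMeasure ν] [IsProbabilityMeasure μ] :
    relEntropy ν μ = klDiv ν μ := by
  by_cases h : ν ≪ μ ∧ Integrable (llr ν μ) ν
  · simp only [relEntropy, klDiv_of_ac_of_integrable h.1 h.2, probReal_univ, add_sub_cancel_right]
    exact if_pos h
  · exact (if_neg h).trans (not_ne_iff.1 (mt klDiv_ne_top_iff.1 h)).symm

/-- A Jensen gap of `klFun`, so that dropping the nonnegative second term bounds the entropy of a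
tilting by `∫ klFun (exp f)`. -/
theorem klDiv_tilted_left_self {μ : Measure E} [IsProbabilityMeasure μ] {f : E → ℝ}
    (hexp : Integrable (fun x => Real.exp (f x)) μ)
    (hmul : Integrable (fun x => Real.exp (f x) * f x) μ) :
    klDiv (μ.tilted f) μ = ENNReal.ofReal
      ((∫ x, klFun (Real.exp (f x)) ∂μ - klFun (∫ x, Real.exp (f x) ∂μ)) /
        ∫ x, Real.exp (f x) ∂μ) := by
  set Z := ∫ x, Real.exp (f x) ∂μ with hZ
  have Z_pos : 0 < Z := integral_exp_pos hexp
  have : IsProbabilityMeasure (μ.tilted f) := isProbabilityMeasure_tilted hexp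
  have integrable_f : Integrable f (μ.tilted f) := (integrable_tilted_iff hexp f).2 hmul
  have llr_eq : llr (μ.tilted f) μ =ᵐ[μ.tilted f] fun x => f x - Real.log Z :=
    tilted_absolutelyContinuous μ f (log_rnDeriv_tilted_left_self hexp)
  have integral_f : ∫ x, f x ∂(μ.tilted f) = (∫ x, Real.exp (f x) * f x ∂μ) / Z := by
    simp only [integral_tilted, smul_eq_mul, div_mul_eq_mul_div, integral_div, hZ]
  have integral_klFun : ∫ x, klFun (Real.exp (f x)) ∂μ =
      (∫ x, Real.exp (f x) * f x ∂μ) + 1 - Z := by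
    simp only [klFun, Real.log_exp]
    rw [integral_sub (hmul.fun_add (integrable_const 1)) hexp,
      integral_add hmul (integrable_const 1), integral_const, probReal_univ, one_smul]
  rw [klDiv_of_ac_of_integrable (tilted_absolutelyContinuous μ f)
    ((integrable_congr llr_eq).2 (integrable_f.sub (integrable_const _))), integral_congr_ae llr_eq,
    integral_sub integrable_f (integrable_const _), integral_f, integral_klFun]
  simp only [integral_const, probReal_univ, one_smul, klFun]
  congr 1
  field_simp
  ring

end Entropy

section Tilt

variable {X : Type*} [TopologicalSpace X]

theorem exists_boundedContinuous_eq_comp (f : X →ᵇ ℝ) {φ : ℝ → ℝ} (hφ : Continuous φ) :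
    ∃ F : X →ᵇ ℝ, ∀ x, F x = φ (f x) := by
  obtain ⟨C, hC⟩ := (isCompact_closedBall (0 : ℝ) ‖f‖).exists_bound_of_continuousOn hφ.continuousOn
  exact ⟨.ofNormedAddCommGroup (φ ∘ f) (hφ.comp f.continuous) C
    fun x => hC _ (mem_closedBall_zero_iff.2 (f.norm_coe_le_norm x)), fun _ => rfl⟩

variable [MeasurableSpace X] [OpensMeasurableSpace X]

theorem integrable_comp_boundedContinuous (μ : Measure X) [IsFiniteMeasure μ] (f : X →ᵇ ℝ)
    {φ : ℝ → ℝ} (hφ : Continuous φ) : Integrable (fun x => φ (f x)) μ := by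
  obtain ⟨F, hF⟩ := exists_boundedContinuous_eq_comp f hφ
  exact (F.integrable μ).congr (.of_forall hF)

theorem continuous_integral_comp_boundedContinuous (f : X →ᵇ ℝ) {φ : ℝ → ℝ}
    (hφ : Continuous φ) :
    Continuous fun μ : ProbabilityMeasure X => ∫ x, φ (f x) ∂(μ : Measure X) := by
  obtain ⟨F, hF⟩ := exists_boundedContinuous_eq_comp f hφ
  simpa only [hF] using ProbabilityMeasure.continuous_integral_boundedContinuousFunction F

/-- The exponential tilting of `μ` by `f`, i.e. the probability measure with density proportional
to `exp f`, for a bounded continuous `f` so that it depends continuously on `μ`. -/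
def tilt (f : X →ᵇ ℝ) (μ : ProbabilityMeasure X) : ProbabilityMeasure X :=
  ⟨(μ : Measure X).tilted f,
    isProbabilityMeasure_tilted (integrable_comp_boundedContinuous _ f Real.continuous_exp)⟩

theorem integral_tilt (f : X →ᵇ ℝ) (μ : ProbabilityMeasure X) (g : X → ℝ) :
    ∫ x, g x ∂(tilt f μ : Measure X) =
      (∫ x, Real.exp (f x) * g x ∂(μ : Measure X)) / ∫ x, Real.exp (f x) ∂(μ : Measure X) := by
  simp only [tilt, ProbabilityMeasure.coe_mk, integral_tilted, smul_eq_mul, div_mul_eq_mul_div,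
    integral_div]

theorem integral_exp_boundedContinuous_pos (f : X →ᵇ ℝ) (μ : ProbabilityMeasure X) :
    0 < ∫ x, Real.exp (f x) ∂(μ : Measure X) :=
  integral_exp_pos (integrable_comp_boundedContinuous _ f Real.continuous_exp)

theorem continuous_tilt (f : X →ᵇ ℝ) : Continuous (tilt f) := by
  refine ProbabilityMeasure.continuous_iff_forall_continuous_integral.2 fun g => ?_
  obtain ⟨F, hF⟩ := exists_boundedContinuous_eq_comp f Real.continuous_exp
  have integral_continuous :=
    ProbabilityMeasure.continuous_integral_boundedContinuousFunction (F * g)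
  simp only [BoundedContinuousFunction.coe_mul, Pi.mul_apply, hF] at integral_continuous
  simp only [integral_tilt]
  exact integral_continuous.div (continuous_integral_comp_boundedContinuous f Real.continuous_exp)
    fun μ => (integral_exp_boundedContinuous_pos f μ).ne'

theorem klDiv_tilt (f : X →ᵇ ℝ) (μ : ProbabilityMeasure X) :
    klDiv (tilt f μ : Measure X) μ = ENNReal.ofReal
      ((∫ x, klFun (Real.exp (f x)) ∂(μ : Measure X) -
          klFun (∫ x, Real.exp (f x) ∂(μ : Measure X))) /
        ∫ x, Real.exp (f x) ∂(μ : Measure X)) :=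
  klDiv_tilted_left_self (integrable_comp_boundedContinuous _ f Real.continuous_exp)
    (integrable_comp_boundedContinuous _ f (Real.continuous_exp.mul continuous_id))

theorem continuous_klDiv_tilt (f : X →ᵇ ℝ) :
    Continuous fun μ : ProbabilityMeasure X => klDiv (tilt f μ : Measure X) μ := by
  have integral_exp_continuous :=
    continuous_integral_comp_boundedContinuous f Real.continuous_exp
  simp only [klDiv_tilt]
  exact ENNReal.continuous_ofReal.comp <|
    ((continuous_integral_comp_boundedContinuous f
        (continuous_klFun.comp Real.continuous_exp)).sub
      (continuous_klFun.comp integral_exp_continuous)).div integral_exp_continuous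
      fun μ => (integral_exp_boundedContinuous_pos f μ).ne'

end Tilt

section Clip

/-- The truncation of `x` to the interval `[M⁻¹, M]`, for `1 ≤ M`. Truncated densities have a
bounded logarithm, and `klFun`, whose derivative is `log`, is Lipschitz on that interval. -/
def clip (M x : ℝ) : ℝ := max M⁻¹ (min M x)

variable {M x y : ℝ}

theorem clip_mem_Icc (hM : 1 ≤ M) (x : ℝ) : clip M x ∈ Icc M⁻¹ M :=
  ⟨le_max_left _ _, max_le ((inv_le_one_of_one_le₀ hM).trans hM) (min_le_left _ _)⟩

theorem clip_pos (hM : 1 ≤ M) (x : ℝ) : 0 < clip M x :=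
  (inv_pos.2 (zero_lt_one.trans_le hM)).trans_le (le_max_left _ _)

theorem lipschitzWith_clip (M : ℝ) : LipschitzWith 1 (clip M) :=
  (LipschitzWith.id.const_min M).const_max M⁻¹

theorem abs_clip_sub_clip_le (M x y : ℝ) : |clip M x - clip M y| ≤ |x - y| := by
  simpa [Real.dist_eq] using (lipschitzWith_clip M).dist_le_mul x y

theorem abs_clip_sub_self_le (hM : 1 ≤ M) (hx : 0 ≤ x) : |clip M x - x| ≤ x + 1 := by
  have clip_le : clip M x ≤ x + 1 :=
    max_le ((inv_le_one_of_one_le₀ hM).trans (le_add_of_nonneg_left hx))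
      ((min_le_right _ _).trans (le_add_of_nonneg_right zero_le_one))
  have := clip_pos hM x
  exact abs_le.2 ⟨by linarith, by linarith⟩

theorem tendsto_clip_atTop (hx : 0 ≤ x) : Tendsto (fun M => clip M x) atTop (𝓝 x) := by
  have min_tendsto : Tendsto (fun M => min M x) atTop (𝓝 x) :=
    tendsto_const_nhds.congr' ((eventually_ge_atTop x).mono fun M hM => (min_eq_right hM).symm)
  simpa only [clip, max_eq_right hx] using tendsto_inv_atTop_zero.max min_tendsto

theorem klFun_clip_le (hM : 1 ≤ M) (hx : 0 ≤ x) : klFun (clip M x) ≤ klFun x := by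
  have hMinv : M⁻¹ ≤ 1 := inv_le_one_of_one_le₀ hM
  have klFun_max : max (klFun x) (klFun 1) = klFun x :=
    max_eq_left (klFun_one.trans_le (klFun_nonneg hx))
  rcases le_total x 1 with h | h
  · rw [← klFun_max]
    refine convexOn_klFun.le_max_of_mem_Icc hx (mem_Ici.2 zero_le_one) ⟨?_, max_le hMinv ?_⟩
    · exact le_max_of_le_right (le_min (h.trans hM) le_rfl)
    · exact (min_le_right _ _).trans h
  · rw [← klFun_max, max_comm]
    refine convexOn_klFun.le_max_of_mem_Icc (mem_Ici.2 zero_le_one) hx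
      ⟨?_, max_le (hMinv.trans h) ?_⟩
    · exact le_max_of_le_right (le_min hM h)
    · exact min_le_right _ _

theorem abs_klFun_sub_klFun_le (hM : 1 ≤ M) (hx : x ∈ Icc M⁻¹ M) (hy : y ∈ Icc M⁻¹ M) :
    |klFun x - klFun y| ≤ Real.log M * |x - y| := by
  have pos {z : ℝ} (hz : z ∈ Icc M⁻¹ M) : 0 < z :=
    (inv_pos.2 (zero_lt_one.trans_le hM)).trans_le hz.1
  refine (convex_Icc M⁻¹ M).norm_image_sub_le_of_norm_hasDerivWithin_le
    (fun z hz => (hasDerivAt_klFun (pos hz).ne').hasDerivWithinAt) (fun z hz => abs_le.2 ⟨?_, ?_⟩)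
    hy hx
  · rw [← Real.log_inv]
    exact Real.log_le_log (inv_pos.2 (zero_lt_one.trans_le hM)) hz.1
  · exact Real.log_le_log (pos hz) hz.2

theorem klFun_clip_le_klFun_add (hM : 1 ≤ M) (hx : 0 ≤ x) (y : ℝ) :
    klFun (clip M y) ≤ klFun x + Real.log M * |x - y| := by
  have lipschitz : |klFun (clip M y) - klFun (clip M x)| ≤ Real.log M * |x - y| :=
    (abs_klFun_sub_klFun_le hM (clip_mem_Icc hM y) (clip_mem_Icc hM x)).trans <|
      mul_le_mul_of_nonneg_left ((abs_clip_sub_clip_le M y x).trans_eq (abs_sub_comm y x))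
        (Real.log_nonneg hM)
  linarith [le_of_abs_le lipschitz, klFun_clip_le hM hx]

section Integral

variable {X : Type*} [MeasurableSpace X] {μ : Measure X} {r g : X → ℝ}

theorem integral_klFun_clip_le (hM : 1 ≤ M) (hr : Integrable r μ) (hr0 : ∀ x, 0 ≤ r x)
    (hkl : Integrable (fun x => klFun (r x)) μ) (hg : Integrable g μ) :
    ∫ x, klFun (clip M (g x)) ∂μ ≤ ∫ x, klFun (r x) ∂μ + Real.log M * ∫ x, |r x - g x| ∂μ := by
  have sub_integrable : Integrable (fun x => Real.log M * |r x - g x|) μ :=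
    (hr.sub hg).abs.const_mul _
  rw [← integral_const_mul, ← integral_add hkl sub_integrable]
  exact integral_mono_of_nonneg (.of_forall fun x => klFun_nonneg (clip_pos hM _).le)
    (hkl.add sub_integrable) (.of_forall fun x => klFun_clip_le_klFun_add hM (hr0 x) (g x))

variable [IsFiniteMeasure μ]

theorem integrable_abs_clip_sub (hM : 1 ≤ M) (hr : Integrable r μ) (hr0 : ∀ x, 0 ≤ r x) :
    Integrable (fun x => |clip M (r x) - r x|) μ :=
  (hr.add (integrable_const 1)).mono' (((lipschitzWith_clip M).continuous.comp_aestronglyMeasurable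
    hr.aestronglyMeasurable).sub hr.aestronglyMeasurable).norm
    (.of_forall fun x => (abs_abs _).trans_le (abs_clip_sub_self_le hM (hr0 x)))

theorem tendsto_integral_abs_clip_sub (hr : Integrable r μ) (hr0 : ∀ x, 0 ≤ r x) :
    Tendsto (fun M => ∫ x, |clip M (r x) - r x| ∂μ) atTop (𝓝 0) := by
  rw [← integral_zero X ℝ (μ := μ)]
  refine tendsto_integral_filter_of_dominated_convergence (fun x => r x + 1) ?_ ?_
    (hr.add (integrable_const 1)) (.of_forall fun x => ?_)
  · filter_upwards [eventually_ge_atTop 1] with M hM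
    exact (integrable_abs_clip_sub hM hr hr0).aestronglyMeasurable
  · filter_upwards [eventually_ge_atTop 1] with M hM
    exact .of_forall fun x => (abs_abs _).trans_le (abs_clip_sub_self_le hM (hr0 x))
  · simpa using ((tendsto_clip_atTop (hr0 x)).sub_const (r x)).abs

theorem integral_abs_clip_sub_le (hM : 1 ≤ M) (hr : Integrable r μ) (hr0 : ∀ x, 0 ≤ r x)
    (hg : Integrable g μ) :
    ∫ x, |clip M (g x) - r x| ∂μ ≤ ∫ x, |r x - g x| ∂μ + ∫ x, |clip M (r x) - r x| ∂μ := by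
  have sub_integrable : Integrable (fun x => |r x - g x|) μ := (hr.sub hg).abs
  have clip_integrable := integrable_abs_clip_sub hM hr hr0
  rw [← integral_add sub_integrable clip_integrable]
  refine integral_mono_of_nonneg (.of_forall fun x => abs_nonneg _)
    (sub_integrable.add clip_integrable) (.of_forall fun x => ?_)
  calc |clip M (g x) - r x|
      ≤ |clip M (g x) - clip M (r x)| + |clip M (r x) - r x| := abs_sub_le _ _ _
    _ ≤ |r x - g x| + |clip M (r x) - r x| :=
        add_le_add ((abs_clip_sub_clip_le M _ _).trans_eq (abs_sub_comm _ _)) le_rfl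

end Integral

end Clip

section Approximation

theorem exists_boundedContinuous_exp_approx {X : Type*} [TopologicalSpace X] [NormalSpace X]
    [MeasurableSpace X] [BorelSpace X] {μ : Measure X} [IsFiniteMeasure μ] [μ.WeaklyRegular]
    {r : X → ℝ} (hr : Integrable r μ) (hr0 : ∀ x, 0 ≤ r x)
    (hkl : Integrable (fun x => klFun (r x)) μ) {ε : ℝ} (hε : 0 < ε) :
    ∃ f : X →ᵇ ℝ, ∫ x, |Real.exp (f x) - r x| ∂μ ≤ ε ∧
      ∫ x, klFun (Real.exp (f x)) ∂μ ≤ ∫ x, klFun (r x) ∂μ + ε := by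
  obtain ⟨M, hM, clip_close⟩ : ∃ M, 1 ≤ M ∧ ∫ x, |clip M (r x) - r x| ∂μ < ε / 2 :=
    ((eventually_ge_atTop 1).and <|
      (tendsto_integral_abs_clip_sub hr hr0).eventually_lt_const (half_pos hε)).exists
  have log_nonneg : 0 ≤ Real.log M := Real.log_nonneg hM
  obtain ⟨δ, δ_pos, δ_le, log_mul_δ_le⟩ : ∃ δ > 0, δ ≤ ε / 2 ∧ Real.log M * δ ≤ ε := by
    refine ⟨min (ε / 2) (ε / (Real.log M + 1)), by positivity, min_le_left _ _, ?_⟩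
    calc Real.log M * min (ε / 2) (ε / (Real.log M + 1))
        ≤ (Real.log M + 1) * (ε / (Real.log M + 1)) :=
          mul_le_mul (by linarith) (min_le_right _ _) (by positivity) (by positivity)
      _ = ε := by field_simp
  obtain ⟨g, g_close, g_integrable⟩ := hr.exists_boundedContinuous_integral_sub_le δ_pos
  simp only [Real.norm_eq_abs] at g_close
  obtain ⟨f, hf⟩ := exists_boundedContinuous_eq_comp g (φ := fun t => Real.log (clip M t))
    ((lipschitzWith_clip M).continuous.log fun t => (clip_pos hM t).ne')
  have exp_f (x : X) : Real.exp (f x) = clip M (g x) := by rw [hf, Real.exp_log (clip_pos hM _)]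
  refine ⟨f, ?_, ?_⟩ <;> simp only [exp_f]
  · linarith [integral_abs_clip_sub_le hM hr hr0 g_integrable]
  · linarith [integral_klFun_clip_le hM hr hr0 hkl g_integrable,
      mul_le_mul_of_nonneg_left g_close log_nonneg]

theorem tendsto_integral_mul_boundedContinuous {X ι : Type*} [TopologicalSpace X]
    [MeasurableSpace X] [OpensMeasurableSpace X] {μ : Measure X} {l : Filter ι} {u : ι → X → ℝ}
    {r : X → ℝ} (hu : ∀ i, Integrable (u i) μ) (hr : Integrable r μ)
    (h : Tendsto (fun i => ∫ x, |u i x - r x| ∂μ) l (𝓝 0)) (g : X →ᵇ ℝ) :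
    Tendsto (fun i => ∫ x, u i x * g x ∂μ) l (𝓝 (∫ x, r x * g x ∂μ)) := by
  have mul_integrable {v : X → ℝ} (hv : Integrable v μ) : Integrable (fun x => v x * g x) μ :=
    hv.mul_bdd g.continuous.aestronglyMeasurable (.of_forall g.norm_coe_le_norm)
  have bound_tendsto : Tendsto (fun i => (∫ x, |u i x - r x| ∂μ) * ‖g‖) l (𝓝 0) := by
    simpa only [zero_mul] using h.mul_const ‖g‖
  refine tendsto_iff_norm_sub_tendsto_zero.2 (squeeze_zero_norm (fun i => ?_) bound_tendsto)
  rw [norm_norm, ← integral_sub (mul_integrable (hu i)) (mul_integrable hr), ← integral_mul_const]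
  refine norm_integral_le_of_norm_le (((hu i).sub hr).abs.mul_const _) (.of_forall fun x => ?_)
  rw [← sub_mul, norm_mul]
  exact mul_le_mul_of_nonneg_left (g.norm_coe_le_norm x) (norm_nonneg _)

variable {X : Type*} [TopologicalSpace X] [MeasurableSpace X]

section Tendsto

variable [OpensMeasurableSpace X] {ι : Type*} {l : Filter ι} {f : ι → X →ᵇ ℝ}
  {μ ν : ProbabilityMeasure X}

theorem tendsto_integral_exp_mul (hνμ : (ν : Measure X) ≪ μ)
    (h : Tendsto (fun i => ∫ x, |Real.exp (f i x) - ((ν : Measure X).rnDeriv μ x).toReal| ∂μ)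
      l (𝓝 0)) (g : X →ᵇ ℝ) :
    Tendsto (fun i => ∫ x, Real.exp (f i x) * g x ∂(μ : Measure X)) l
      (𝓝 (∫ x, g x ∂(ν : Measure X))) := by
  rw [← integral_rnDeriv_smul hνμ]
  exact tendsto_integral_mul_boundedContinuous
    (fun i => integrable_comp_boundedContinuous _ (f i) Real.continuous_exp)
    Measure.integrable_toReal_rnDeriv h g

theorem tendsto_integral_exp (hνμ : (ν : Measure X) ≪ μ)
    (h : Tendsto (fun i => ∫ x, |Real.exp (f i x) - ((ν : Measure X).rnDeriv μ x).toReal| ∂μ)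
      l (𝓝 0)) :
    Tendsto (fun i => ∫ x, Real.exp (f i x) ∂(μ : Measure X)) l (𝓝 1) := by
  simpa using tendsto_integral_exp_mul hνμ h 1

theorem tendsto_tilt (hνμ : (ν : Measure X) ≪ μ)
    (h : Tendsto (fun i => ∫ x, |Real.exp (f i x) - ((ν : Measure X).rnDeriv μ x).toReal| ∂μ)
      l (𝓝 0)) :
    Tendsto (fun i => tilt (f i) μ) l (𝓝 ν) := by
  refine ProbabilityMeasure.tendsto_iff_forall_integral_tendsto.2 fun g => ?_
  simp only [integral_tilt]
  rw [← div_one (∫ x, g x ∂(ν : Measure X))]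
  exact (tendsto_integral_exp_mul hνμ h g).div (tendsto_integral_exp hνμ h) one_ne_zero

end Tendsto

variable [BorelSpace X] [NormalSpace X] {μ ν : ProbabilityMeasure X}
  [(μ : Measure X).WeaklyRegular] {U : Set (ProbabilityMeasure X)}

theorem exists_tilt_mem_klDiv_lt (hU : U ∈ 𝓝 ν) {a : ℝ≥0∞} (ha : klDiv (ν : Measure X) μ < a) :
    ∃ f : X →ᵇ ℝ, tilt f μ ∈ U ∧ klDiv (tilt f μ : Measure X) μ < a := by
  obtain ⟨hνμ, llr_integrable⟩ := klDiv_ne_top_iff.1 (ne_top_of_lt ha)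
  have klDiv_eq := klDiv_eq_integral_klFun.trans (if_pos ⟨hνμ, llr_integrable⟩)
  set r := fun x => ((ν : Measure X).rnDeriv μ x).toReal
  choose f f_close klFun_f_le using fun n : ℕ => exists_boundedContinuous_exp_approx (r := r)
    Measure.integrable_toReal_rnDeriv (fun _ => toReal_nonneg)
    ((integrable_klFun_rnDeriv_iff hνμ).2 llr_integrable) (Nat.one_div_pos_of_nat (n := n))
  have f_tendsto : Tendsto (fun n => ∫ x, |Real.exp (f n x) - r x| ∂(μ : Measure X)) atTop (𝓝 0) :=
    squeeze_zero (fun n => integral_nonneg fun x => abs_nonneg _) f_close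
      tendsto_one_div_add_atTop_nhds_zero_nat
  have klDiv_tilt_le (n : ℕ) : klDiv (tilt (f n) μ : Measure X) μ ≤ ENNReal.ofReal
      ((∫ x, klFun (r x) ∂(μ : Measure X) + 1 / (n + 1)) /
        ∫ x, Real.exp (f n x) ∂(μ : Measure X)) := by
    have integral_exp_pos := integral_exp_boundedContinuous_pos (f n) μ
    rw [klDiv_tilt]
    refine ENNReal.ofReal_le_ofReal (div_le_div_of_nonneg_right ?_ integral_exp_pos.le)
    exact (sub_le_self _ (klFun_nonneg integral_exp_pos.le)).trans (klFun_f_le n)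
  have bound_tendsto := ENNReal.tendsto_ofReal <|
    (tendsto_one_div_add_atTop_nhds_zero_nat.const_add (∫ x, klFun (r x) ∂(μ : Measure X))).div
      (tendsto_integral_exp hνμ f_tendsto) one_ne_zero
  rw [add_zero, div_one, ← klDiv_eq] at bound_tendsto
  obtain ⟨n, tilt_mem, bound_lt⟩ :=
    (((tendsto_tilt hνμ f_tendsto).eventually hU).and (bound_tendsto.eventually_lt_const ha)).exists
  exact ⟨f n, tilt_mem, (klDiv_tilt_le n).trans_lt bound_lt⟩

theorem eventually_exists_klDiv_lt (hU : U ∈ 𝓝 ν) {a : ℝ≥0∞}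
    (ha : klDiv (ν : Measure X) μ < a) :
    ∀ᶠ μ' : ProbabilityMeasure X in 𝓝 μ, ∃ ν' ∈ U, klDiv (ν' : Measure X) μ' < a := by
  obtain ⟨f, tilt_mem, klDiv_lt⟩ := exists_tilt_mem_klDiv_lt (interior_mem_nhds.2 hU) ha
  filter_upwards [(continuous_tilt f).continuousAt.eventually_mem
      (isOpen_interior.mem_nhds tilt_mem),
    (continuous_klDiv_tilt f).continuousAt.eventually_lt_const klDiv_lt] with μ' hmem hlt
  exact ⟨tilt f μ', interior_subset hmem, hlt⟩

theorem eventually_exists_mul_klDiv_lt (hU : U ∈ 𝓝 ν) {c b : ℝ≥0∞} (hc : c ≠ ∞)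
    (hb : c * klDiv (ν : Measure X) μ < b) :
    ∀ᶠ μ' : ProbabilityMeasure X in 𝓝 μ, ∃ ν' ∈ U, c * klDiv (ν' : Measure X) μ' < b := by
  rcases eq_or_ne c 0 with rfl | hc0
  · -- The entropy may be infinite, but `0 * ∞ = 0`.
    rw [zero_mul] at hb
    exact .of_forall fun μ' => ⟨ν, mem_of_mem_nhds hU, by rwa [zero_mul]⟩
  · simp only [mul_comm c, ← ENNReal.lt_div_iff_mul_lt (.inl hc0) (.inl hc)] at hb ⊢
    exact eventually_exists_klDiv_lt hU hb

end Approximation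

theorem Tp_weak_limit_general {E : Type*} [TopologicalSpace E] [PolishSpace E] [MeasurableSpace E]
    [BorelSpace E] {p : ℝ} (hp : 0 < p) {d : E → E → ℝ≥0∞} (hd : Continuous (Function.uncurry d))
    (C : ℝ) : IsClosed {μ : ProbabilityMeasure E | TpIneqE p d C μ} := by
  refine isClosed_iff_frequently.2 fun μ frequently_TpIneqE ν hν => ?_
  rw [relEntropy_eq_klDiv]
  by_contra! lt_wasserstein
  obtain ⟨b, lt_b, b_lt⟩ := exists_between lt_wasserstein
  let ν₀ : ProbabilityMeasure E := ⟨ν, hν⟩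
  have sq_lsc : LowerSemicontinuous fun ρ : ProbabilityMeasure E × ProbabilityMeasure E =>
      wassersteinDistE p d ρ.1 ρ.2 ^ 2 :=
    (ENNReal.continuous_pow 2).comp_lowerSemicontinuous
      (lowerSemicontinuous_wassersteinDistE hp hd) (pow_left_mono 2)
  obtain ⟨U, hU, V, hV, lt_on_prod⟩ := mem_nhds_prod_iff.1 (sq_lsc (μ, ν₀) b b_lt)
  obtain ⟨μ', hμ', hμ'U, ν', hν'V, klDiv_lt⟩ := (frequently_TpIneqE.and_eventually <|
    (eventually_mem_set.2 hU).and <|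
      eventually_exists_mul_klDiv_lt (ν := ν₀) hV ofReal_ne_top lt_b).exists
  have TpIneqE_le := hμ' ν' inferInstance
  rw [relEntropy_eq_klDiv] at TpIneqE_le
  exact (TpIneqE_le.trans_lt klDiv_lt).not_gt (lt_on_prod (mk_mem_prod hμ'U hν'V))

/-- **Lemma 2.2: stability of `T_p(C)` under weak convergence** on a Polish space. -/
theorem Tp_weak_limit
    {E : Type*} [MeasurableSpace E] [MetricSpace E] [CompleteSpace E]
    [SecondCountableTopology E] [BorelSpace E]
    (p C : ℝ) (hp : 1 ≤ p)
    (μs : ℕ → ProbabilityMeasure E) (μ : ProbabilityMeasure E)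
    (hT : ∀ n, TpIneq p dist C (μs n : Measure E))
    (hconv : Filter.Tendsto μs Filter.atTop (nhds μ)) :
    TpIneq p dist C (μ : Measure E) :=
  (Tp_weak_limit_general (d := fun x y => ENNReal.ofReal (dist x y)) (zero_lt_one.trans_le hp)
    (ENNReal.continuous_ofReal.comp continuous_dist) C).mem_of_tendsto hconv (.of_forall hT)

end
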